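/- arXiv:1807.00928 — 2 statements merged into one kernel-verified Lean document; each statement's English description precedes it below -/
import Mathlib

section
/- Let n ≥ 1, r > 0, and let f : ℂⁿ → [0, ∞] be measurable. Then ∫_{B_r(0) ⊆ ℂⁿ} f dV = (1/2π) ∫_{S^{2n−1}} ( ∫_{B_r(0) ⊆ ℂ} |w|^{2n−2} f(λ w) dA(w) ) dσ(λ), where the inner integral is over the disk of radius r in ℂ and λ w denotes the scalar multiple of λ ∈ ℂⁿ by w ∈ ℂ. -/
open MeasureTheory ENNReal

noncomputable instance (n : ℕ) : MeasurableSpace (EuclideanSpace ℂ (Fin n)) :=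
  MeasurableSpace.comap WithLp.ofLp MeasurableSpace.pi

instance (n : ℕ) : BorelSpace (EuclideanSpace ℂ (Fin n)) := PiLp.borelSpace ..

/-!
Lebesgue measure on `ℂⁿ` is invariant under multiplication by unit complex numbers, so `∫ f` is
unchanged when `f` is replaced by its mean over circle orbits, `z ↦ (1/2π) ∫ f (e^{iθ} z) dθ`.
In polar coordinates of `ℂⁿ` this turns the ray through a unit vector `λ` into the complex line
through `λ`, and polar coordinates of that line absorb one factor `t` of `t^{2n-1}`.
Integrals over balls are the special case of integrands supported in a ball, because
`‖w • λ‖ = ‖w‖`.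
-/

lemma det_restrictScalars_circle_smul_id {V : Type*} [AddCommGroup V] [Module ℂ V] (c : Circle) :
    LinearMap.det (((c : ℂ) • (LinearMap.id : V →ₗ[ℂ] V)).restrictScalars ℝ) = 1 := by
  rw [LinearMap.det_restrictScalars, LinearMap.det_smul, LinearMap.det_id, mul_one,
    Algebra.norm_complex_apply, map_pow, Circle.normSq_coe, one_pow]

instance smulInvariantMeasure_circle_of_isAddHaarMeasure {E : Type*} [NormedAddCommGroup E]
    [NormedSpace ℂ E] [FiniteDimensional ℂ E] [MeasurableSpace E] [BorelSpace E]
    (μ : Measure E) [μ.IsAddHaarMeasure] : SMulInvariantMeasure Circle E μ where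
  measure_preimage_smul c s _ := by
    have hdet := det_restrictScalars_circle_smul_id (V := E) c
    have hpre := μ.addHaar_preimage_linearMap (hdet.trans_ne one_ne_zero) s
    rwa [hdet, inv_one, abs_one, ENNReal.ofReal_one, one_mul] at hpre

lemma lintegral_lintegral_smul_eq_measure_univ_mul {α G X : Type*} [MeasurableSpace α]
    [MeasurableSpace X] [Group G] [MulAction G X] [MeasurableConstSMul G X]
    {μ : Measure X} [SFinite μ] [SMulInvariantMeasure G X μ] {ν : Measure α} [SFinite ν]
    {c : α → G} {f : X → ℝ≥0∞}
    (hf : AEMeasurable (fun p : X × α => f (c p.2 • p.1)) (μ.prod ν)) :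
    ∫⁻ x, ∫⁻ a, f (c a • x) ∂ν ∂μ = ν Set.univ * ∫⁻ x, f x ∂μ := by
  have hinv (g : G) : ∫⁻ x, f (g • x) ∂μ = ∫⁻ x, f x ∂μ :=
    (measurePreserving_smul g μ).lintegral_comp_emb (measurableEmbedding_const_smul g) f
  calc ∫⁻ x, ∫⁻ a, f (c a • x) ∂ν ∂μ
      = ∫⁻ a, ∫⁻ x, f (c a • x) ∂μ ∂ν := lintegral_lintegral_swap hf
    _ = ∫⁻ _, ∫⁻ x, f x ∂μ ∂ν := by simp only [hinv]
    _ = ν Set.univ * ∫⁻ x, f x ∂μ := by rw [lintegral_const, mul_comm]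

section PlanePolarCoordinates

variable {g : ℂ → ℝ≥0∞}

lemma complex_polarCoord_symm_eq_circleExp_smul (t θ : ℝ) :
    Complex.polarCoord.symm (t, θ) = Circle.exp θ • (t : ℂ) := by
  rw [Complex.polarCoord_symm_apply, Circle.smul_def, Circle.coe_exp, Complex.exp_mul_I,
    Complex.ofReal_cos, Complex.ofReal_sin, smul_eq_mul, mul_comm]

lemma lintegral_complex_eq_lintegral_Ioi_circleExp (hg : Measurable g) :
    ∫⁻ w, g w = ∫⁻ t in Set.Ioi (0 : ℝ), ENNReal.ofReal t *
      ∫⁻ θ in Set.Ioo (-Real.pi) Real.pi, g (Circle.exp θ • (t : ℂ)) := by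
  have hmeas : Measurable fun p : ℝ × ℝ => g (Circle.exp p.2 • (p.1 : ℂ)) :=
    hg.comp (Continuous.measurable (by fun_prop))
  calc ∫⁻ w, g w
      = ∫⁻ p in Set.Ioi (0 : ℝ) ×ˢ Set.Ioo (-Real.pi) Real.pi,
          ENNReal.ofReal p.1 * g (Circle.exp p.2 • (p.1 : ℂ)) := by
        simp only [← Complex.lintegral_comp_polarCoord_symm, polarCoord_target, smul_eq_mul,
          ← complex_polarCoord_symm_eq_circleExp_smul]
    _ = ∫⁻ t in Set.Ioi (0 : ℝ), ∫⁻ θ in Set.Ioo (-Real.pi) Real.pi,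
          ENNReal.ofReal t * g (Circle.exp θ • (t : ℂ)) := by
        rw [Measure.volume_eq_prod]
        exact setLIntegral_prod _ (measurable_fst.ennreal_ofReal.mul hmeas).aemeasurable
    _ = ∫⁻ t in Set.Ioi (0 : ℝ), ENNReal.ofReal t *
          ∫⁻ θ in Set.Ioo (-Real.pi) Real.pi, g (Circle.exp θ • (t : ℂ)) :=
        lintegral_congr fun _ => lintegral_const_mul _ (hmeas.comp measurable_prodMk_left)

lemma lintegral_norm_mul_eq_lintegral_Ioi_circleExp {ρ : ℝ → ℝ≥0∞} (hρ : Measurable ρ)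
    (hg : Measurable g) :
    ∫⁻ w, ρ ‖w‖ * g w = ∫⁻ t in Set.Ioi (0 : ℝ), ENNReal.ofReal t * ρ t *
      ∫⁻ θ in Set.Ioo (-Real.pi) Real.pi, g (Circle.exp θ • (t : ℂ)) := by
  rw [lintegral_complex_eq_lintegral_Ioi_circleExp (by fun_prop)]
  refine setLIntegral_congr_fun measurableSet_Ioi fun t (ht : 0 < t) => ?_
  have hnorm (θ : ℝ) : ‖Circle.exp θ • (t : ℂ)‖ = t := by
    rw [Circle.smul_def, norm_smul, Circle.norm_coe, one_mul, Complex.norm_of_nonneg ht.le]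
  have hmeas : Measurable fun θ : ℝ => g (Circle.exp θ • (t : ℂ)) :=
    hg.comp (Continuous.measurable (by fun_prop))
  simp only [hnorm, lintegral_const_mul _ hmeas, mul_assoc]

end PlanePolarCoordinates

lemma preimage_smul_const_ball_zero {𝕜 E : Type*} [NormedField 𝕜] [SeminormedAddCommGroup E]
    [NormedSpace 𝕜 E] {v : E} (hv : ‖v‖ = 1) (r : ℝ) :
    (fun c : 𝕜 => c • v) ⁻¹' Metric.ball 0 r = Metric.ball 0 r := by
  ext c
  simp only [Set.mem_preimage, mem_ball_zero_iff, norm_smul, hv, mul_one]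

lemma setLIntegral_Ioi_ofReal_mul_ofReal_pow_mul (k : ℕ) (h : ℝ → ℝ≥0∞) :
    ∫⁻ t in Set.Ioi (0 : ℝ), ENNReal.ofReal t * ENNReal.ofReal (t ^ k) * h t =
      ∫⁻ t in Set.Ioi (0 : ℝ), ENNReal.ofReal (t ^ (k + 1)) * h t := by
  refine setLIntegral_congr_fun measurableSet_Ioi fun t (ht : 0 < t) => ?_
  simp only [← ENNReal.ofReal_mul ht.le, pow_succ']

section ComplexLines

variable {E : Type*} [NormedAddCommGroup E] [NormedSpace ℂ E] [MeasurableSpace E] [BorelSpace E]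
  {μ : Measure E} [SFinite μ] [SMulInvariantMeasure Circle E μ]
  {σ : Measure (Metric.sphere (0 : E) 1)} {ρ : ℝ → ℝ≥0∞} {f : E → ℝ≥0∞}

theorem lintegral_eq_inv_two_pi_mul_lintegral_sphere_lintegral_complex (hρ : Measurable ρ)
    (hσ : ∀ g : E → ℝ≥0∞, Measurable g → ∫⁻ x, g x ∂μ =
      ∫⁻ v : Metric.sphere (0 : E) 1, (∫⁻ t in Set.Ioi (0 : ℝ),
        ENNReal.ofReal t * ρ t * g (t • (v : E))) ∂σ)
    (hf : Measurable f) :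
    ∫⁻ z, f z ∂μ = (ENNReal.ofReal (2 * Real.pi))⁻¹ *
      ∫⁻ v : Metric.sphere (0 : E) 1, (∫⁻ w : ℂ, ρ ‖w‖ * f (w • (v : E))) ∂σ := by
  set arc := volume.restrict (Set.Ioo (-Real.pi) Real.pi) with harc
  have harc_univ : arc Set.univ = ENNReal.ofReal (2 * Real.pi) := by
    rw [harc, Measure.restrict_apply_univ, Real.volume_Ioo]
    ring_nf
  have hjoint : Measurable fun p : E × ℝ => f (Circle.exp p.2 • p.1) :=
    hf.comp (Continuous.measurable (by fun_prop))
  have hline (v : E) : ∫⁻ w : ℂ, ρ ‖w‖ * f (w • v) = ∫⁻ t in Set.Ioi (0 : ℝ),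
      ENNReal.ofReal t * ρ t * ∫⁻ θ, f (Circle.exp θ • t • v) ∂arc := by
    have hmeas : Measurable fun w : ℂ => f (w • v) :=
      hf.comp (Continuous.measurable (by fun_prop))
    simp only [lintegral_norm_mul_eq_lintegral_Ioi_circleExp hρ hmeas, smul_assoc,
      Complex.coe_smul, harc]
  have hpolar : ∫⁻ v : Metric.sphere (0 : E) 1, (∫⁻ w : ℂ, ρ ‖w‖ * f (w • (v : E))) ∂σ =
      ENNReal.ofReal (2 * Real.pi) * ∫⁻ z, f z ∂μ := by
    simp only [hline]
    rw [← hσ _ hjoint.lintegral_prod_right',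
      lintegral_lintegral_smul_eq_measure_univ_mul hjoint.aemeasurable, harc_univ]
  rw [hpolar, ENNReal.inv_mul_cancel_left (by simp [Real.pi_pos]) ENNReal.ofReal_ne_top]

theorem stmt_9_general (hρ : Measurable ρ)
    (hσ : ∀ g : E → ℝ≥0∞, Measurable g → ∫⁻ x, g x ∂μ =
      ∫⁻ v : Metric.sphere (0 : E) 1, (∫⁻ t in Set.Ioi (0 : ℝ),
        ENNReal.ofReal t * ρ t * g (t • (v : E))) ∂σ)
    (hf : Measurable f) (r : ℝ) :
    ∫⁻ z in Metric.ball (0 : E) r, f z ∂μ = (ENNReal.ofReal (2 * Real.pi))⁻¹ *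
      ∫⁻ v : Metric.sphere (0 : E) 1,
        (∫⁻ w in Metric.ball (0 : ℂ) r, ρ ‖w‖ * f (w • (v : E))) ∂σ := by
  have hslice (v : Metric.sphere (0 : E) 1) (w : ℂ) :
      (Metric.ball 0 r).indicator f (w • (v : E)) =
        (Metric.ball 0 r).indicator (fun w : ℂ => f (w • (v : E))) w := by
    rw [← preimage_smul_const_ball_zero (norm_eq_of_mem_sphere v)]
    rfl
  rw [← lintegral_indicator measurableSet_ball,
    lintegral_eq_inv_two_pi_mul_lintegral_sphere_lintegral_complex hρ hσ
      (hf.indicator measurableSet_ball)]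
  simp only [hslice, ← lintegral_indicator measurableSet_ball, Set.indicator_mul_right]

end ComplexLines

/-- For `n ≥ 1`, `r > 0`, and measurable `f : ℂⁿ → [0,∞]`,
`∫_{B_r(0) ⊆ ℂⁿ} f dV = (1/2π) ∫_{S^{2n−1}} ∫_{B_r(0) ⊆ ℂ} |w|^{2n−2} f(λw) dA(w) dσ(λ)`,
where `σ` is the surface measure on the unit sphere of `ℂⁿ`, normalized so that the
polar-coordinates formula
`∫_{ℝ^{2n}} g dV = ∫_{S^{2n−1}} ∫_0^∞ t^{2n−1} g(tλ) dt dσ(λ)` holds. -/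
theorem stmt_9 (n : ℕ) (hn : 1 ≤ n) (r : ℝ) (hr : 0 < r)
    (f : EuclideanSpace ℂ (Fin n) → ℝ≥0∞) (hf : Measurable f)
    (σ : Measure (Metric.sphere (0 : EuclideanSpace ℂ (Fin n)) 1))
    (hσ : ∀ g : EuclideanSpace ℂ (Fin n) → ℝ≥0∞, Measurable g →
      ∫⁻ x, g x =
        ∫⁻ v : Metric.sphere (0 : EuclideanSpace ℂ (Fin n)) 1,
          (∫⁻ t in Set.Ioi (0 : ℝ),
            ENNReal.ofReal (t ^ (2 * n - 1)) * g (t • (v : EuclideanSpace ℂ (Fin n)))) ∂σ) :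
    ∫⁻ z in Metric.ball (0 : EuclideanSpace ℂ (Fin n)) r, f z =
      (ENNReal.ofReal (2 * Real.pi))⁻¹ *
        ∫⁻ v : Metric.sphere (0 : EuclideanSpace ℂ (Fin n)) 1,
          (∫⁻ w in Metric.ball (0 : ℂ) r,
            ENNReal.ofReal (‖w‖ ^ (2 * n - 2)) *
              f (w • (v : EuclideanSpace ℂ (Fin n)))) ∂σ := by
  have hpow : 2 * n - 2 + 1 = 2 * n - 1 := by omega
  exact stmt_9_general (ρ := fun t => ENNReal.ofReal (t ^ (2 * n - 2))) (by fun_prop)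
    (by simpa only [setLIntegral_Ioi_ofReal_mul_ofReal_pow_mul, hpow] using hσ) hf r
end

section
/- Let (ℛ, d) be a metric space with a distinguished point 0, with metric completion (ℛ̄, d), let F : ℛ → ℝ be lower semicontinuous, and let F̄ : ℛ̄ → ℝ ∪ {+∞} be its greatest lsc extension, F̄(u) = sup_{ε>0} inf { F(v) : v ∈ ℛ, d(u,v) ≤ ε }. Let ℳ = { u ∈ ℛ̄ : F̄(u) = inf_{ℛ̄} F̄ } be the set of minimizers, and let G be a group acting on ℛ, with d_G(Gu, Gv) := inf_{f,g ∈ G} d(f.u, g.v) on the orbit space. Assume: (P1) for any φ₀, φ₁ ∈ ℛ there is a d-geodesic segment [0,1] ∋ t ↦ φ_t ∈ ℛ̄ joining them along which t ↦ F̄(φ_t) is continuous and convex; (P2) every sequence φ_j ∈ ℛ̄ with F̄(φ_j) → inf_{ℛ̄} F̄ and d(0, φ_j) bounded has a subsequence d-converging to some element of ℳ; (P3) ℳ ⊆ ℛ; (P4) G acts on ℛ by d-isometries; (P5) G acts transitively on ℳ; (P6) if ℳ ≠ ∅ then for any u, v ∈ ℛ there exists g ∈ G with d_G(Gu, Gv)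 = d(u, g.v); (P7) F(v) − F(u) = F(g.v) − F(g.u) for all u, v ∈ ℛ and g ∈ G. Then ℳ is nonempty if and only if F is G-invariant and there exist C, D > 0 such that F(u) ≥ C · d_G(G0, Gu) − D for all u ∈ ℛ. -/
open UniformSpace Filter Topology

/-- The greatest lower semicontinuous extension of `F : X → ℝ` to the metric completion of `X`:
`extF F u = sup_{ε>0} inf { F v : v ∈ X, dist u v ≤ ε }`, with values in `ℝ ∪ {±∞}`. -/
noncomputable def extF {X : Type*} [MetricSpace X] (F : X → ℝ) (u : Completion X) : EReal :=
  ⨆ (ε : ℝ) (_ : 0 < ε), ⨅ (v : X) (_ : dist u (v : Completion X) ≤ ε), (F v : EReal)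

/-- The induced distance between the `G`-orbits of two points:
`dOrbit G u v = inf_{f,g ∈ G} dist (f.u) (g.v)`. -/
noncomputable def dOrbit {X : Type*} [MetricSpace X] (G : Type*) [Group G] [MulAction G X]
    (u v : X) : ℝ :=
  ⨅ p : G × G, dist (p.1 • u) (p.2 • v)

/-!
By (P7), applying `g` changes `F` by a constant, and applying `g ^ n` changes it by `n` times that
constant; once `F` is bounded below, the constant must vanish, so `F` is invariant.

Let `m` minimize `extF F`. By compactness of minimizing sequences, the points of the unit sphere
around `m` that stay away from the orbit `G m` have energy at least `inf F + δ` for some `δ > 0`.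
Given `x` far from `G m`, move it within its orbit until it nearly realizes the orbit distance to
`m`. The geodesic from `m` then meets the sphere at a point away from `G m`, so by convexity the gap
`δ` at distance `1` forces at least linear growth up to `x`. Conversely, the terms of a minimizing
sequence of an invariant coercive `F` can be moved by `G` into a bounded set.
-/

section Minimizers

variable {Y : Type*}

/-- The set of global minimizers of `Φ`, empty when the infimum of `Φ` is not attained. -/
def minimizers (Φ : Y → EReal) : Set Y :=
  {u | Φ u = ⨅ v, Φ v}

variable [PseudoMetricSpace Y]

/-- The compactness property (P2): minimizing sequences at bounded distance from `o` have a
subsequence converging to a minimizer. -/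
def MinimizingSequencesSubconverge (Φ : Y → EReal) (o : Y) : Prop :=
  ∀ φ : ℕ → Y, Tendsto (fun j => Φ (φ j)) atTop (𝓝 (⨅ v, Φ v)) →
    (∃ C : ℝ, ∀ j, dist o (φ j) ≤ C) →
    ∃ u ∈ minimizers Φ, ∃ σ : ℕ → ℕ, StrictMono σ ∧ Tendsto (fun k => φ (σ k)) atTop (𝓝 u)

theorem MinimizingSequencesSubconverge.exists_lt_forall_exists_dist_lt {Φ : Y → EReal} {o : Y}
    (hΦ : MinimizingSequencesSubconverge Φ o) (h_top : (⨅ v, Φ v) < ⊤) (R : ℝ)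
    {r : ℝ} (hr : 0 < r) :
    ∃ c : ℝ, (⨅ v, Φ v) < c ∧
      ∀ v, dist o v ≤ R → Φ v < c → ∃ u ∈ minimizers Φ, dist u v < r := by
  suffices h : ∃ c, (⨅ v, Φ v) < c ∧
      ∀ v, dist o v ≤ R → Φ v < c → ∃ u ∈ minimizers Φ, dist u v < r by
    obtain ⟨c, hc, hclose⟩ := h
    obtain ⟨c', hc', hc'c⟩ := EReal.lt_iff_exists_real_btwn.1 hc
    exact ⟨c', hc', fun v hv hvc => hclose v hv (hvc.trans hc'c)⟩
  by_contra! hfar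
  obtain ⟨c, -, hc, hc_lim⟩ := exists_seq_strictAnti_tendsto' h_top
  choose φ hφ_dist hφ_lt hφ_far using fun n => hfar (c n) (hc n).1
  have hφ_lim : Tendsto (fun n => Φ (φ n)) atTop (𝓝 (⨅ v, Φ v)) :=
    tendsto_of_tendsto_of_tendsto_of_le_of_le tendsto_const_nhds hc_lim
      (fun n => iInf_le Φ (φ n)) fun n => (hφ_lt n).le
  obtain ⟨u, hu, σ, -, hσ⟩ := hΦ φ hφ_lim ⟨R, hφ_dist⟩
  obtain ⟨k, hk⟩ := (Metric.tendsto_nhds.1 hσ r hr).exists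
  exact (hφ_far (σ k) u hu).not_gt (dist_comm u _ ▸ hk)

end Minimizers

section Extension

variable {X : Type*} [MetricSpace X] (F : X → ℝ)

theorem extF_coe_le (x : X) : extF F (x : Completion X) ≤ F x :=
  iSup₂_le fun _ hε => iInf₂_le x (by simpa only [dist_self] using hε.le)

theorem iInf_le_extF (u : Completion X) : (⨅ x, (F x : EReal)) ≤ extF F u :=
  le_iSup₂_of_le 1 one_pos (le_iInf₂ fun v _ => iInf_le _ v)

theorem iInf_extF : (⨅ u, extF F u) = ⨅ x, (F x : EReal) :=
  le_antisymm (le_iInf fun x => (iInf_le _ _).trans (extF_coe_le F x)) (le_iInf (iInf_le_extF F))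

/-- The convexity property of (P1): any two points of `X` are joined by a geodesic segment in the
completion along which `extF F` is real-valued and convex. A segment is encoded as a function on
`ℝ` of which only the restriction to `[0, 1]` matters; `f` is `extF F ∘ γ` there. -/
def HasConvexGeodesics : Prop :=
  ∀ x y : X, ∃ γ : ℝ → Completion X, ∃ f : ℝ → ℝ,
    γ 0 = x ∧ γ 1 = y ∧
    (∀ s ∈ Set.Icc (0 : ℝ) 1, ∀ t ∈ Set.Icc (0 : ℝ) 1, dist (γ s) (γ t) = |s - t| * dist x y) ∧
    (∀ t ∈ Set.Icc (0 : ℝ) 1, extF F (γ t) = f t) ∧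
    ConvexOn ℝ (Set.Icc 0 1) f

variable {F}

theorem HasConvexGeodesics.exists_extF_coe_eq (hconv : HasConvexGeodesics F) (x : X) :
    ∃ a : ℝ, extF F (x : Completion X) = a := by
  obtain ⟨γ, f, h0, -, -, hf, -⟩ := hconv x x
  exact ⟨f 0, h0 ▸ hf 0 (Set.left_mem_Icc.2 zero_le_one)⟩

theorem le_apply_of_mem_minimizers {u : Completion X} {a : ℝ} (hu : u ∈ minimizers (extF F))
    (ha : extF F u = a) (x : X) : a ≤ F x := by
  rw [← EReal.coe_le_coe_iff, ← ha, show extF F u = _ from hu]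
  exact (iInf_le _ _).trans (extF_coe_le F x)

theorem HasConvexGeodesics.bddBelow_range (hconv : HasConvexGeodesics F) {m : X}
    (hm : (m : Completion X) ∈ minimizers (extF F)) : BddBelow (Set.range F) := by
  obtain ⟨a, ha⟩ := hconv.exists_extF_coe_eq m
  exact ⟨a, Set.forall_mem_range.2 (le_apply_of_mem_minimizers hm ha)⟩

theorem HasConvexGeodesics.exists_dist_eq_extF_le (hconv : HasConvexGeodesics F) {x y : X} {a r : ℝ}
    (ha : extF F (x : Completion X) = a) (hr : 0 ≤ r) (hrd : r ≤ dist x y) :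
    ∃ v : Completion X, dist (x : Completion X) v = r ∧ dist v (y : Completion X) = dist x y - r ∧
      extF F v ≤ ((a + r / dist x y * (F y - a) : ℝ) : EReal) := by
  obtain ⟨γ, f, h0, h1, hγ, hf, hf_conv⟩ := hconv x y
  set t := r / dist x y
  have mem0 : (0 : ℝ) ∈ Set.Icc (0 : ℝ) 1 := Set.left_mem_Icc.2 zero_le_one
  have mem1 : (1 : ℝ) ∈ Set.Icc (0 : ℝ) 1 := Set.right_mem_Icc.2 zero_le_one
  have ht : t ∈ Set.Icc (0 : ℝ) 1 := ⟨by positivity, div_le_one_of_le₀ hrd dist_nonneg⟩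
  have htd : t * dist x y = r := div_mul_cancel_of_imp fun hd => le_antisymm (hd ▸ hrd) hr
  have hf0 : f 0 = a := by
    rw [← EReal.coe_eq_coe_iff, ← hf 0 mem0, h0, ha]
  have hf1 : f 1 ≤ F y := by
    rw [← EReal.coe_le_coe_iff, ← hf 1 mem1, h1]
    exact extF_coe_le F y
  refine ⟨γ t, ?_, ?_, ?_⟩
  · rw [← h0, hγ 0 mem0 t ht, zero_sub, abs_neg, abs_of_nonneg ht.1, htd]
  · rw [← h1, hγ t ht 1 mem1, abs_sub_comm, abs_of_nonneg (sub_nonneg.2 ht.2), sub_mul, one_mul,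
      htd]
  · rw [hf t ht, EReal.coe_le_coe_iff]
    calc f t = f ((1 - t) • 0 + t • 1) := by simp only [smul_eq_mul, mul_zero, mul_one, zero_add]
      _ ≤ (1 - t) • f 0 + t • f 1 :=
        hf_conv.2 mem0 mem1 (sub_nonneg.2 ht.2) ht.1 (sub_add_cancel 1 t)
      _ ≤ (1 - t) • a + t • F y := by
        rw [hf0]
        exact add_le_add_right (smul_le_smul_of_nonneg_left hf1 ht.1) _
      _ = a + t * (F y - a) := by simp only [smul_eq_mul]; ring

end Extension

section OrbitDistance

variable {X : Type*} [MetricSpace X] {G : Type*} [Group G] [MulAction G X]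

theorem dOrbit_le_dist_smul_smul (u v : X) (f g : G) : dOrbit G u v ≤ dist (f • u) (g • v) :=
  ciInf_le (f := fun p : G × G => dist (p.1 • u) (p.2 • v))
    ⟨0, Set.forall_mem_range.2 fun _ => dist_nonneg⟩ (f, g)

theorem dOrbit_le_dist_smul (u v : X) (g : G) : dOrbit G u v ≤ dist u (g • v) := by
  simpa only [one_smul] using dOrbit_le_dist_smul_smul u v 1 g

theorem exists_dist_smul_lt_of_dOrbit_lt [IsIsometricSMul G X] {u v : X} {r : ℝ}
    (h : dOrbit G u v < r) : ∃ g : G, dist u (g • v) < r := by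
  obtain ⟨⟨f, g⟩, hfg⟩ := exists_lt_of_ciInf_lt h
  refine ⟨f⁻¹ * g, ?_⟩
  rwa [← dist_smul f, mul_smul, smul_inv_smul]

theorem dOrbit_le_dist_add_dOrbit [IsIsometricSMul G X] (u v w : X) :
    dOrbit G u w ≤ dist u v + dOrbit G v w := by
  refine le_of_forall_pos_lt_add fun ε hε => ?_
  obtain ⟨g, hg⟩ := exists_dist_smul_lt_of_dOrbit_lt (lt_add_of_pos_right (dOrbit G v w) hε)
  calc dOrbit G u w ≤ dist u (g • w) := dOrbit_le_dist_smul u w g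
    _ ≤ dist u v + dist v (g • w) := dist_triangle _ _ _
    _ < dist u v + dOrbit G v w + ε := by linarith

end OrbitDistance

section Invariance

variable {X G : Type*} {F : X → ℝ}

theorem apply_pow_smul_eq_add_nsmul [Monoid G] [MulAction G X]
    (hdiff : ∀ u v : X, ∀ g : G, F v - F u = F (g • v) - F (g • u)) (g : G) (u : X) (n : ℕ) :
    F (g ^ n • u) = F u + n * (F (g • u) - F u) := by
  induction n with
  | zero => simp only [pow_zero, one_smul, Nat.cast_zero, zero_mul, add_zero]
  | succ n ih =>
    have hstep := hdiff u (g ^ n • u) g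
    rw [pow_succ', mul_smul]
    push_cast
    linarith

theorem le_apply_smul_of_bddBelow [Monoid G] [MulAction G X] (hF : BddBelow (Set.range F))
    (hdiff : ∀ u v : X, ∀ g : G, F v - F u = F (g • v) - F (g • u)) (g : G) (u : X) :
    F u ≤ F (g • u) := by
  by_contra! hlt
  obtain ⟨b, hb⟩ := hF
  obtain ⟨n, hn⟩ := exists_lt_nsmul (sub_pos.2 hlt) (F u - b)
  have hbn : b ≤ F (g ^ n • u) := hb ⟨_, rfl⟩
  rw [apply_pow_smul_eq_add_nsmul hdiff] at hbn
  rw [nsmul_eq_mul] at hn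
  linarith

theorem apply_smul_eq_of_bddBelow [Group G] [MulAction G X] (hF : BddBelow (Set.range F))
    (hdiff : ∀ u v : X, ∀ g : G, F v - F u = F (g • v) - F (g • u)) (g : G) (u : X) :
    F (g • u) = F u := by
  refine le_antisymm ?_ (le_apply_smul_of_bddBelow hF hdiff g u)
  simpa only [inv_smul_smul] using le_apply_smul_of_bddBelow hF hdiff g⁻¹ (g • u)

end Invariance

section Coercivity

variable {X : Type*} [MetricSpace X] {G : Type*} [Group G] [MulAction G X] [IsIsometricSMul G X]
  {F : X → ℝ}

theorem HasConvexGeodesics.mul_dOrbit_le (hconv : HasConvexGeodesics F)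
    (hinv : ∀ g : G, ∀ u : X, F (g • u) = F u) {m x : X} {a c r R : ℝ}
    (ha : extF F (m : Completion X) = a) (hac : a ≤ c) (hR : 0 < R) (hrR : r < R)
    (hsphere : ∀ v : Completion X, dist (m : Completion X) v = R → extF F v < c →
      ∃ g : G, dist ((g • m : X) : Completion X) v < r)
    (hx : R ≤ dOrbit G m x) :
    (c - a) * dOrbit G m x ≤ R * (F x - a) := by
  obtain ⟨g, hg⟩ := exists_dist_smul_lt_of_dOrbit_lt
    (lt_add_of_pos_right (dOrbit G m x) (sub_pos.2 hrR))
  have hd : dOrbit G m x ≤ dist m (g • x) := dOrbit_le_dist_smul m x g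
  obtain ⟨v, hmv, hvx, hv⟩ := hconv.exists_dist_eq_extF_le ha hR.le (hx.trans hd)
  have hcv : (c : EReal) ≤ extF F v := by
    by_contra! hlt
    obtain ⟨f, hf⟩ := hsphere v hmv hlt
    have : dOrbit G m x < dOrbit G m x :=
      calc dOrbit G m x ≤ dist (f • m) (g • x) := dOrbit_le_dist_smul_smul m x f g
        _ = dist ((f • m : X) : Completion X) ((g • x : X) : Completion X) :=
          (Completion.dist_eq _ _).symm
        _ ≤ dist ((f • m : X) : Completion X) v + dist v ((g • x : X) : Completion X) :=
          dist_triangle _ _ _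
        _ < dOrbit G m x := by linarith
    exact this.false
  have hgap : c - a ≤ R * (F x - a) / dist m (g • x) := by
    have := EReal.coe_le_coe_iff.1 (hcv.trans hv)
    rw [hinv, div_mul_eq_mul_div] at this
    linarith
  calc (c - a) * dOrbit G m x ≤ (c - a) * dist m (g • x) :=
        mul_le_mul_of_nonneg_left hd (sub_nonneg.2 hac)
    _ ≤ R * (F x - a) := (le_div_iff₀ (hR.trans_le (hx.trans hd))).1 hgap

theorem HasConvexGeodesics.exists_forall_add_mul_dOrbit_sub_one_le (hconv : HasConvexGeodesics F)
    {o : Completion X} (hcomp : MinimizingSequencesSubconverge (extF F) o)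
    (hreg : ∀ u ∈ minimizers (extF F), ∃ x : X, u = x)
    (htrans : ∀ x y : X, (x : Completion X) ∈ minimizers (extF F) →
      (y : Completion X) ∈ minimizers (extF F) → ∃ g : G, g • x = y)
    (hinv : ∀ g : G, ∀ u : X, F (g • u) = F u)
    {m : X} (hm : (m : Completion X) ∈ minimizers (extF F)) :
    ∃ C : ℝ, 0 < C ∧ ∃ a : ℝ, ∀ x, a + C * (dOrbit G m x - 1) ≤ F x := by
  obtain ⟨a, ha⟩ := hconv.exists_extF_coe_eq m
  have hinf : (⨅ u, extF F u) = a := hm.symm.trans ha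
  obtain ⟨c, hac, hclose⟩ := hcomp.exists_lt_forall_exists_dist_lt
    (hinf ▸ EReal.coe_lt_top a) (dist o m + 1) one_half_pos
  rw [hinf, EReal.coe_lt_coe_iff] at hac
  have hsphere : ∀ v : Completion X, dist (m : Completion X) v = 1 → extF F v < c →
      ∃ g : G, dist ((g • m : X) : Completion X) v < 1 / 2 := by
    intro v hmv hv
    obtain ⟨w, hw, hwv⟩ := hclose v (hmv ▸ dist_triangle _ _ _) hv
    obtain ⟨y, rfl⟩ := hreg w hw
    obtain ⟨g, rfl⟩ := htrans m y hm hw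
    exact ⟨g, hwv⟩
  refine ⟨c - a, sub_pos.2 hac, a, fun x => ?_⟩
  rcases le_total 1 (dOrbit G m x) with hfar | hnear
  · have := hconv.mul_dOrbit_le hinv ha hac.le one_pos one_half_lt_one hsphere hfar
    linarith
  · have := mul_nonpos_of_nonneg_of_nonpos (sub_pos.2 hac).le (sub_nonpos.2 hnear)
    linarith [le_apply_of_mem_minimizers hm ha x]

theorem exists_forall_mul_dOrbit_sub_le {m : X} {C a : ℝ} (hC : 0 ≤ C)
    (h : ∀ x, a + C * (dOrbit G m x - 1) ≤ F x) (x₀ : X) :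
    ∃ D : ℝ, 0 < D ∧ ∀ x, C * dOrbit G x₀ x - D ≤ F x := by
  refine ⟨C * (dist x₀ m + 1) + |a| + 1, by positivity, fun x => ?_⟩
  have htri := mul_le_mul_of_nonneg_left (dOrbit_le_dist_add_dOrbit (G := G) x₀ m x) hC
  linarith [h x, neg_abs_le a]

theorem exists_dist_le_of_mul_dOrbit_sub_le {x₀ : X} {C D : ℝ} (hC : 0 < C)
    (hinv : ∀ g : G, ∀ u : X, F (g • u) = F u) (hF : ∀ u, C * dOrbit G x₀ u - D ≤ F u)
    {B : ℝ} {u : X} (hu : F u ≤ B) : ∃ v, F v = F u ∧ dist x₀ v ≤ (B + D) / C + 1 := by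
  obtain ⟨g, hg⟩ := exists_dist_smul_lt_of_dOrbit_lt (lt_add_one (dOrbit G x₀ u))
  have hdOrbit : dOrbit G x₀ u ≤ (B + D) / C := by
    rw [le_div_iff₀' hC]
    linarith [hF u]
  exact ⟨g • u, hinv g u, by linarith⟩

theorem MinimizingSequencesSubconverge.nonempty_minimizers {x₀ : X}
    (hcomp : MinimizingSequencesSubconverge (extF F) x₀) {C D : ℝ} (hC : 0 < C)
    (hinv : ∀ g : G, ∀ u : X, F (g • u) = F u) (hF : ∀ u, C * dOrbit G x₀ u - D ≤ F u) :
    (minimizers (extF F)).Nonempty := by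
  obtain ⟨e, he_anti, he_lim, he_mem⟩ := exists_seq_tendsto_sInf
    (S := Set.range fun x => (F x : EReal)) ⟨_, x₀, rfl⟩ (OrderBot.bddBelow _)
  simp only [Set.mem_range] at he_mem
  choose u hu using he_mem
  have hu_le : ∀ n, F (u n) ≤ F (u 0) := fun n => by
    rw [← EReal.coe_le_coe_iff, hu, hu]
    exact he_anti n.zero_le
  choose v hv hv_dist using fun n => exists_dist_le_of_mul_dOrbit_sub_le hC hinv hF (hu_le n)
  rw [sInf_range, ← iInf_extF] at he_lim
  have hv_lim : Tendsto (fun n => extF F (v n)) atTop (𝓝 (⨅ w, extF F w)) := by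
    refine tendsto_of_tendsto_of_tendsto_of_le_of_le tendsto_const_nhds he_lim
      (fun n => iInf_le _ _) fun n => ?_
    rw [← hu n, ← hv n]
    exact extF_coe_le F (v n)
  obtain ⟨w, hw, -⟩ := hcomp (fun n => v n) hv_lim
    ⟨_, fun n => (Completion.dist_eq x₀ (v n)).trans_le (hv_dist n)⟩
  exact ⟨w, hw⟩

end Coercivity

theorem stmt_10_general {X : Type*} [MetricSpace X] (x₀ : X)
    (G : Type*) [Group G] [MulAction G X] [IsIsometricSMul G X] (F : X → ℝ)
    (hconv : HasConvexGeodesics F)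
    (hcomp : MinimizingSequencesSubconverge (extF F) (x₀ : Completion X))
    (hreg : ∀ u ∈ minimizers (extF F), ∃ x : X, u = x)
    (htrans : ∀ x y : X, (x : Completion X) ∈ minimizers (extF F) →
      (y : Completion X) ∈ minimizers (extF F) → ∃ g : G, g • x = y)
    (hdiff : ∀ u v : X, ∀ g : G, F v - F u = F (g • v) - F (g • u)) :
    (minimizers (extF F)).Nonempty ↔
      (∀ g : G, ∀ u : X, F (g • u) = F u) ∧
        ∃ C : ℝ, 0 < C ∧ ∃ D : ℝ, 0 < D ∧ ∀ u : X, F u ≥ C * dOrbit G x₀ u - D := by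
  constructor
  · rintro ⟨w, hw⟩
    obtain ⟨m, rfl⟩ := hreg w hw
    have hinv := apply_smul_eq_of_bddBelow (hconv.bddBelow_range hw) hdiff
    obtain ⟨C, hC, a, hgrowth⟩ :=
      hconv.exists_forall_add_mul_dOrbit_sub_one_le hcomp hreg htrans hinv hw
    exact ⟨hinv, C, hC, exists_forall_mul_dOrbit_sub_le hC.le hgrowth x₀⟩
  · rintro ⟨hinv, C, hC, D, -, hF⟩
    exact hcomp.nonempty_minimizers hC hinv hF

/-- The general existence/properness principle: under properties (P1)–(P7), the set `M` of
minimizers of the greatest lsc extension of `F` on the metric completion is nonempty if and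
only if `F` is `G`-invariant and `F(u) ≥ C·d_G(G0, Gu) − D` for some `C, D > 0`. -/
theorem stmt_10 {X : Type*} [MetricSpace X] (x₀ : X)
    (G : Type*) [Group G] [MulAction G X]
    (F : X → ℝ) (hF : LowerSemicontinuous F)
    (M : Set (Completion X))
    (hM : M = {u : Completion X | extF F u = ⨅ v : Completion X, extF F v})
    -- (P1): d-geodesics between points of X along which the extension of F is
    -- continuous and convex (in particular finite, real-valued).
    (P1 : ∀ φ₀ φ₁ : X, ∃ γ : ℝ → Completion X, ∃ f : ℝ → ℝ,
      γ 0 = (φ₀ : Completion X) ∧ γ 1 = (φ₁ : Completion X) ∧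
      (∀ s ∈ Set.Icc (0 : ℝ) 1, ∀ t ∈ Set.Icc (0 : ℝ) 1,
        dist (γ s) (γ t) = |s - t| * dist φ₀ φ₁) ∧
      (∀ t ∈ Set.Icc (0 : ℝ) 1, extF F (γ t) = (f t : EReal)) ∧
      ContinuousOn f (Set.Icc 0 1) ∧ ConvexOn ℝ (Set.Icc 0 1) f)
    -- (P2): minimizing sequences at bounded distance from the base point subconverge to
    -- a minimizer.
    (P2 : ∀ φ : ℕ → Completion X,
      Tendsto (fun j => extF F (φ j)) atTop (𝓝 (⨅ v : Completion X, extF F v)) →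
      (∃ C : ℝ, ∀ j, dist ((x₀ : Completion X)) (φ j) ≤ C) →
      ∃ u ∈ M, ∃ σ : ℕ → ℕ, StrictMono σ ∧ Tendsto (fun k => φ (σ k)) atTop (𝓝 u))
    -- (P3): minimizers are regular, i.e. lie in X.
    (P3 : ∀ u ∈ M, ∃ x : X, u = (x : Completion X))
    -- (P4): G acts by d-isometries.
    (P4 : ∀ g : G, Isometry (fun x : X => g • x))
    -- (P5): G acts on M, transitively.
    (P5a : ∀ g : G, ∀ x : X, (x : Completion X) ∈ M → ((g • x : X) : Completion X) ∈ M)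
    (P5b : ∀ x y : X, (x : Completion X) ∈ M → (y : Completion X) ∈ M → ∃ g : G, g • x = y)
    -- (P6): if M is nonempty, the orbit distance is attained.
    (P6 : M.Nonempty → ∀ u v : X, ∃ g : G, dOrbit G u v = dist u (g • v))
    -- (P7): F is of Bott--Chern type: differences are G-invariant.
    (P7 : ∀ u v : X, ∀ g : G, F v - F u = F (g • v) - F (g • u)) :
    M.Nonempty ↔
      ((∀ g : G, ∀ u : X, F (g • u) = F u) ∧
        ∃ C : ℝ, 0 < C ∧ ∃ D : ℝ, 0 < D ∧
          ∀ u : X, F u ≥ C * dOrbit G x₀ u - D) := by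
  subst hM
  have : IsIsometricSMul G X := ⟨P4⟩
  exact stmt_10_general x₀ G F
    (fun x y => let ⟨γ, f, h0, h1, hγ, hf, _, hf_conv⟩ := P1 x y; ⟨γ, f, h0, h1, hγ, hf, hf_conv⟩)
    P2 P3 P5b P7
end
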